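/- arXiv:2009.12203 — 2 statements merged into one kernel-verified Lean document; each statement's English description precedes it below -/
import Mathlib

section
/- Let A ∈ ℍ^{m×r}, X ∈ ℍ^{m×n}, B' ∈ ℍ^{r×n} be quaternion matrices and λ > 0 a real number. Define h(B) = ½‖A·B − X‖_F² + (λ/2)‖B − B'‖_F² for B ∈ ℍ^{r×n}. Then the matrix B₀ = (Aᴴ·A + λ·I)⁻¹·(Aᴴ·X + λ·B') is a global minimizer of h: for every B ∈ ℍ^{r×n}, h(B₀) ≤ h(B). -/
open scoped Quaternion Matrix

/-- The Frobenius norm of a quaternion matrix. -/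
noncomputable def frob {m n : ℕ} (A : Matrix (Fin m) (Fin n) ℍ[ℝ]) : ℝ :=
  Real.sqrt (∑ i, ∑ j, ‖A i j‖ ^ 2)

/-- Real inner product of quaternion matrices. -/
noncomputable def qip {m n : ℕ} (U V : Matrix (Fin m) (Fin n) ℍ[ℝ]) : ℝ :=
  (Matrix.trace (Uᴴ * V)).re

lemma qip_self {m n : ℕ} (U : Matrix (Fin m) (Fin n) ℍ[ℝ]) :
    qip U U = ∑ i, ∑ j, ‖U i j‖ ^ 2 := by
  have hre : ∀ {k : ℕ} (f : Fin k → ℍ[ℝ]), (∑ i, f i).re = ∑ i, (f i).re := by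
    intro k f
    exact map_sum (⟨⟨fun q : ℍ[ℝ] => q.re, rfl⟩, fun _ _ => rfl⟩ : ℍ[ℝ] →+ ℝ) f _
  unfold qip
  simp only [Matrix.trace, Matrix.diag, Matrix.mul_apply, Matrix.conjTranspose_apply, hre]
  rw [Finset.sum_comm]
  refine Finset.sum_congr rfl fun i _ => Finset.sum_congr rfl fun j _ => ?_
  rw [Quaternion.star_mul_self, Quaternion.re_coe, Quaternion.normSq_eq_norm_mul_self, sq]

lemma frob_sq {m n : ℕ} (U : Matrix (Fin m) (Fin n) ℍ[ℝ]) : frob U ^ 2 = qip U U := by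
  rw [qip_self, frob, Real.sq_sqrt]
  positivity

lemma qip_nonneg {m n : ℕ} (U : Matrix (Fin m) (Fin n) ℍ[ℝ]) : 0 ≤ qip U U := by
  rw [← frob_sq]; positivity

lemma qip_eq_zero {m n : ℕ} (U : Matrix (Fin m) (Fin n) ℍ[ℝ]) (h : qip U U = 0) : U = 0 := by
  rw [qip_self] at h
  ext1 i j
  have h1 := (Finset.sum_eq_zero_iff_of_nonneg (fun i _ => by positivity)).1 h i (Finset.mem_univ _)
  have h2 := (Finset.sum_eq_zero_iff_of_nonneg (fun i _ => by positivity)).1 h1 j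
    (Finset.mem_univ _)
  simpa using h2

lemma qip_comm {m n : ℕ} (U V : Matrix (Fin m) (Fin n) ℍ[ℝ]) : qip U V = qip V U := by
  have : Uᴴ * V = (Vᴴ * U)ᴴ := by simp
  rw [qip, this, Matrix.trace_conjTranspose, Quaternion.re_star, qip]

lemma qip_add_right {m n : ℕ} (U V W : Matrix (Fin m) (Fin n) ℍ[ℝ]) :
    qip U (V + W) = qip U V + qip U W := by
  simp [qip, Matrix.mul_add]

lemma qip_smul_right {m n : ℕ} (c : ℝ) (U V : Matrix (Fin m) (Fin n) ℍ[ℝ]) :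
    qip U (c • V) = c * qip U V := by
  simp [qip, Matrix.trace_smul]

lemma qip_mul {m r n : ℕ} (A : Matrix (Fin m) (Fin r) ℍ[ℝ]) (U : Matrix (Fin r) (Fin n) ℍ[ℝ])
    (V : Matrix (Fin m) (Fin n) ℍ[ℝ]) : qip (A * U) V = qip U (Aᴴ * V) := by
  simp [qip, Matrix.conjTranspose_mul, Matrix.mul_assoc]

lemma qip_add_self {m n : ℕ} (U V : Matrix (Fin m) (Fin n) ℍ[ℝ]) :
    qip (U + V) (U + V) = qip U U + 2 * qip V U + qip V V := by
  rw [qip_add_right, qip_comm (U + V) U, qip_comm (U + V) V, qip_add_right, qip_add_right,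
    qip_comm U V]
  ring

lemma isUnit_reg {m r : ℕ} (A : Matrix (Fin m) (Fin r) ℍ[ℝ]) (lam : ℝ) (hlam : 0 < lam) :
    IsUnit (Aᴴ * A + lam • (1 : Matrix (Fin r) (Fin r) ℍ[ℝ])) := by
  set M := Aᴴ * A + lam • (1 : Matrix (Fin r) (Fin r) ℍ[ℝ]) with hM
  have hz : ∀ Z : Matrix (Fin r) (Fin r) ℍ[ℝ], M * Z = 0 → Z = 0 := by
    intro Z h
    have h0 : qip Z (M * Z) = 0 := by rw [h]; simp [qip]
    rw [hM, Matrix.add_mul, qip_add_right, Matrix.mul_assoc, ← qip_mul, Matrix.smul_mul,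
      Matrix.one_mul, qip_smul_right] at h0
    apply qip_eq_zero
    nlinarith [qip_nonneg (A * Z), qip_nonneg Z]
  have hinj : Function.Injective (LinearMap.mulLeft ℝ M) := by
    rw [injective_iff_map_eq_zero]
    exact hz
  haveI : FiniteDimensional ℝ (Matrix (Fin r) (Fin r) ℍ[ℝ]) :=
    inferInstanceAs (FiniteDimensional ℝ (Fin r → Fin r → ℍ[ℝ]))
  obtain ⟨W, hW⟩ := LinearMap.injective_iff_surjective.1 hinj 1
  have hW1 : M * W = 1 := hW
  have hW2 : W * M = 1 := by
    rw [← sub_eq_zero]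
    apply hz
    rw [mul_sub, ← mul_assoc, hW1]; simp
  exact ⟨⟨M, W, hW1, hW2⟩, rfl⟩

/-- The matrix B₀ = (Aᴴ·A + λ·I)⁻¹·(Aᴴ·X + λ·B') is a global minimizer of
h(B) = ½‖A·B − X‖_F² + (λ/2)‖B − B'‖_F². -/
theorem global_min_B {m r n : ℕ}
    (A : Matrix (Fin m) (Fin r) ℍ[ℝ]) (X : Matrix (Fin m) (Fin n) ℍ[ℝ])
    (B' : Matrix (Fin r) (Fin n) ℍ[ℝ]) (lam : ℝ) (hlam : 0 < lam) :
    ∀ B : Matrix (Fin r) (Fin n) ℍ[ℝ],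
      (1 / 2) * frob (A * (Ring.inverse (Aᴴ * A + lam • (1 : Matrix (Fin r) (Fin r) ℍ[ℝ])) *
            (Aᴴ * X + lam • B')) - X) ^ 2 +
        (lam / 2) * frob (Ring.inverse (Aᴴ * A + lam • (1 : Matrix (Fin r) (Fin r) ℍ[ℝ])) *
            (Aᴴ * X + lam • B') - B') ^ 2 ≤
      (1 / 2) * frob (A * B - X) ^ 2 + (lam / 2) * frob (B - B') ^ 2 := by
  intro B
  have hu := isUnit_reg A lam hlam
  set B0 := Ring.inverse (Aᴴ * A + lam • (1 : Matrix (Fin r) (Fin r) ℍ[ℝ])) *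
            (Aᴴ * X + lam • B') with hB0
  have hN : (Aᴴ * A + lam • (1 : Matrix (Fin r) (Fin r) ℍ[ℝ])) * B0 = Aᴴ * X + lam • B' := by
    rw [hB0, ← Matrix.mul_assoc, Ring.mul_inverse_cancel _ hu, Matrix.one_mul]
  have hN' : Aᴴ * (A * B0 - X) + lam • (B0 - B') = 0 := by
    rw [Matrix.add_mul, Matrix.smul_mul, Matrix.one_mul, Matrix.mul_assoc] at hN
    rw [Matrix.mul_sub, smul_sub, sub_add_sub_comm, hN, sub_self]
  have hc : qip (A * (B - B0)) (A * B0 - X) + lam * qip (B - B0) (B0 - B') = 0 := by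
    rw [qip_mul, ← qip_smul_right, ← qip_add_right, hN']
    simp [qip]
  have e1 : A * B - X = (A * B0 - X) + A * (B - B0) := by
    rw [Matrix.mul_sub]; abel
  have e2 : B - B' = (B0 - B') + (B - B0) := by abel
  rw [e1, e2]
  simp only [frob_sq]
  rw [qip_add_self, qip_add_self]
  nlinarith [qip_nonneg (A * (B - B0)), mul_nonneg hlam.le (qip_nonneg (B - B0))]
end

section
/- Fix D ∈ ℍ^{m×n}, Ω ⊆ Fin m × Fin n, and λ > 0. Let A : ℕ → ℍ^{m×r}, B : ℕ → ℍ^{r×n}, X : ℕ → ℍ^{m×n} satisfy, for every k: X^k_{ij} = D_{ij} for (i,j) ∈ Ω and X^k_{ij} = (A^k·B^k)_{ij} otherwise; A^{k+1} = (X^k·(B^k)ᴴ + λ·A^k)·(B^k·(B^k)ᴴ + λ·I)⁻¹; and B^{k+1} = ((A^{k+1})ᴴ·A^{k+1} + λ·I)⁻¹·((A^{k+1})ᴴ·X^k + λ·B^k). Assume the sequence {(A^k, B^k, X^k)} is bounded. Then for every triple (A#, B#, X#) that is the limit of a convergent subsequence of {(A^k, B^k, X^k)}, one has X#_{ij} =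 D_{ij} for (i,j) ∈ Ω, (A#·B# − X#)·(B#)ᴴ = 0, (A#)ᴴ·(A#·B# − X#) = 0, and X#_{ij} = (A#·B#)_{ij} for (i,j) ∉ Ω. -/
open scoped Quaternion Matrix
open Filter

noncomputable def sqf {m n : ℕ} (A : Matrix (Fin m) (Fin n) ℍ[ℝ]) : ℝ :=
  ∑ i, ∑ j, ‖A i j‖ ^ 2

noncomputable def rtr {m : ℕ} (A : Matrix (Fin m) (Fin m) ℍ[ℝ]) : ℝ := ∑ i, (A i i).re

lemma quat_re_sum {ι : Type*} (s : Finset ι) (f : ι → ℍ[ℝ]) :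
    (∑ i ∈ s, f i).re = ∑ i ∈ s, (f i).re := by
  classical
  induction s using Finset.induction_on with
  | empty => simp
  | insert a s ha ih => simp [Finset.sum_insert ha, ih]

lemma rtr_add {m : ℕ} (A B : Matrix (Fin m) (Fin m) ℍ[ℝ]) : rtr (A + B) = rtr A + rtr B := by
  simp [rtr, Finset.sum_add_distrib]

lemma rtr_smul {m : ℕ} (c : ℝ) (A : Matrix (Fin m) (Fin m) ℍ[ℝ]) :
    rtr (c • A) = c * rtr A := by
  simp [rtr, Finset.mul_sum]

lemma rtr_conj {m : ℕ} (A : Matrix (Fin m) (Fin m) ℍ[ℝ]) : rtr Aᴴ = rtr A := by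
  simp [rtr, Matrix.conjTranspose_apply]

lemma rtr_comm {m n : ℕ} (A : Matrix (Fin m) (Fin n) ℍ[ℝ]) (B : Matrix (Fin n) (Fin m) ℍ[ℝ]) :
    rtr (A * B) = rtr (B * A) := by
  simp only [rtr, Matrix.mul_apply, quat_re_sum]
  rw [Finset.sum_comm]
  refine Finset.sum_congr rfl fun i _ => Finset.sum_congr rfl fun j _ => ?_
  simp only [Quaternion.re_mul]
  ring

lemma sqf_eq {m n : ℕ} (A : Matrix (Fin m) (Fin n) ℍ[ℝ]) : sqf A = rtr (A * Aᴴ) := by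
  simp only [rtr, sqf, Matrix.mul_apply, quat_re_sum, Matrix.conjTranspose_apply]
  refine Finset.sum_congr rfl fun i _ => Finset.sum_congr rfl fun j _ => ?_
  rw [Quaternion.self_mul_star, Quaternion.re_coe, Quaternion.normSq_eq_norm_mul_self, sq]

lemma sqf_nonneg {m n : ℕ} (A : Matrix (Fin m) (Fin n) ℍ[ℝ]) : 0 ≤ sqf A := by
  unfold sqf; positivity

lemma entry_le {m n : ℕ} (A : Matrix (Fin m) (Fin n) ℍ[ℝ]) (i j) : ‖A i j‖ ^ 2 ≤ sqf A := by
  unfold sqf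
  calc ‖A i j‖ ^ 2 ≤ ∑ j, ‖A i j‖ ^ 2 :=
        Finset.single_le_sum (f := fun j => ‖A i j‖ ^ 2) (fun _ _ => by positivity)
          (Finset.mem_univ j)
    _ ≤ _ := Finset.single_le_sum (f := fun i => ∑ j, ‖A i j‖ ^ 2)
          (fun _ _ => by positivity) (Finset.mem_univ i)

lemma sqf_zero {m n : ℕ} (A : Matrix (Fin m) (Fin n) ℍ[ℝ]) (h : sqf A ≤ 0) : A = 0 := by
  ext1 i j
  have := entry_le A i j
  have h2 : ‖A i j‖ ^ 2 = 0 := le_antisymm (this.trans h) (by positivity)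
  simpa using h2

lemma sqf_conj {m n : ℕ} (A : Matrix (Fin m) (Fin n) ℍ[ℝ]) : sqf Aᴴ = sqf A := by
  rw [sqf_eq, sqf_eq, Matrix.conjTranspose_conjTranspose, rtr_comm]

lemma sqf_add {m n : ℕ} (A B : Matrix (Fin m) (Fin n) ℍ[ℝ]) :
    sqf (A + B) = sqf A + sqf B + 2 * rtr (A * Bᴴ) := by
  have : rtr (B * Aᴴ) = rtr (A * Bᴴ) := by
    rw [← rtr_conj (A * Bᴴ), Matrix.conjTranspose_mul, Matrix.conjTranspose_conjTranspose]
  rw [sqf_eq, sqf_eq, sqf_eq, Matrix.conjTranspose_add, Matrix.add_mul, Matrix.mul_add,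
    Matrix.mul_add, rtr_add, rtr_add, rtr_add, this]
  ring

lemma tendsto_of_sqf {m n : ℕ} (P : ℕ → Matrix (Fin m) (Fin n) ℍ[ℝ])
    (h : Tendsto (fun k => sqf (P k)) atTop (nhds 0)) : Tendsto P atTop (nhds 0) := by
  refine tendsto_pi_nhds.mpr fun i => tendsto_pi_nhds.mpr fun j => ?_
  change Tendsto (fun k => P k i j) atTop (nhds 0)
  rw [tendsto_zero_iff_norm_tendsto_zero]
  have h2 : Tendsto (fun k => ‖P k i j‖ ^ 2) atTop (nhds 0) :=
    squeeze_zero (fun _ => by positivity) (fun k => entry_le (P k) i j) h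
  have h3 := h2.sqrt
  simpa using h3

lemma tendsto_of_frob {m n : ℕ} (P : ℕ → Matrix (Fin m) (Fin n) ℍ[ℝ])
    (Q : Matrix (Fin m) (Fin n) ℍ[ℝ])
    (h : Tendsto (fun k => frob (P k - Q)) atTop (nhds 0)) : Tendsto P atTop (nhds Q) := by
  have h1 : Tendsto (fun k => sqf (P k - Q)) atTop (nhds 0) := by
    have h2 := h.pow 2
    simp only [ne_eq, OfNat.ofNat_ne_zero, not_false_eq_true, zero_pow] at h2
    refine h2.congr fun k => ?_
    exact Real.sq_sqrt (sqf_nonneg (P k - Q))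
  have h3 := (tendsto_of_sqf _ h1).add_const Q
  simpa using h3

lemma conj_smul' {m n : ℕ} (c : ℝ) (A : Matrix (Fin m) (Fin n) ℍ[ℝ]) :
    (c • A)ᴴ = c • Aᴴ := by
  ext1 i j
  simp only [Matrix.conjTranspose_apply, Matrix.smul_apply, Quaternion.star_smul]

lemma tendsto_entry {a b : ℕ} {P : ℕ → Matrix (Fin a) (Fin b) ℍ[ℝ]}
    {p : Matrix (Fin a) (Fin b) ℍ[ℝ]} (i : Fin a) (j : Fin b)
    (hP : Tendsto P atTop (nhds p)) : Tendsto (fun k => P k i j) atTop (nhds (p i j)) :=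
  ((continuous_id.matrix_elem i j).tendsto p).comp hP

lemma mulT {a b c : ℕ} {P : ℕ → Matrix (Fin a) (Fin b) ℍ[ℝ]}
    {Q : ℕ → Matrix (Fin b) (Fin c) ℍ[ℝ]} {p : Matrix (Fin a) (Fin b) ℍ[ℝ]}
    {q : Matrix (Fin b) (Fin c) ℍ[ℝ]} (hP : Tendsto P atTop (nhds p))
    (hQ : Tendsto Q atTop (nhds q)) : Tendsto (fun i => P i * Q i) atTop (nhds (p * q)) := by
  have hc : Continuous fun z : Matrix (Fin a) (Fin b) ℍ[ℝ] × Matrix (Fin b) (Fin c) ℍ[ℝ] =>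
    z.1 * z.2 := continuous_fst.matrix_mul continuous_snd
  have h1 := hc.tendsto (p, q)
  have h2 : Tendsto (fun i => (P i, Q i)) atTop (nhds (p, q)) := hP.prodMk_nhds hQ
  have h3 := h1.comp h2
  simp only [Function.comp_def] at h3
  exact h3

lemma conjT {a b : ℕ} {P : ℕ → Matrix (Fin a) (Fin b) ℍ[ℝ]} {p : Matrix (Fin a) (Fin b) ℍ[ℝ]}
    (hP : Tendsto P atTop (nhds p)) : Tendsto (fun i => (P i)ᴴ) atTop (nhds pᴴ) :=
  ((continuous_id.matrix_conjTranspose).tendsto p).comp hP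

lemma smulT {a b : ℕ} (c : ℝ) {P Q : ℕ → Matrix (Fin a) (Fin b) ℍ[ℝ]}
    {p : Matrix (Fin a) (Fin b) ℍ[ℝ]} (hP : Tendsto P atTop (nhds p))
    (hQ : Tendsto Q atTop (nhds p)) : Tendsto (fun i => c • (P i - Q i)) atTop (nhds 0) := by
  have h := hP.sub hQ
  rw [sub_self] at h
  have hc : Continuous fun z : Matrix (Fin a) (Fin b) ℍ[ℝ] => c • z := continuous_const_smul c
  have h2 := (hc.tendsto 0).comp h
  rwa [smul_zero] at h2

lemma unit_aux {r n : ℕ} (B : Matrix (Fin r) (Fin n) ℍ[ℝ]) (lam : ℝ) (hlam : 0 < lam) :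
    IsUnit (B * Bᴴ + lam • (1 : Matrix (Fin r) (Fin r) ℍ[ℝ])) := by
  set M := B * Bᴴ + lam • (1 : Matrix (Fin r) (Fin r) ℍ[ℝ]) with hM
  have hH : Mᴴ = M := by
    simp [hM, Matrix.conjTranspose_add, Matrix.conjTranspose_mul, conj_smul']
  have hinj : Function.Injective (LinearMap.mulLeft ℝ M) := by
    rw [injective_iff_map_eq_zero]
    intro Y hY
    have hY' : M * Y = 0 := hY
    have h0 : rtr (Yᴴ * (M * Y)) = 0 := by rw [hY']; simp [rtr]
    have h1 : Yᴴ * (M * Y) = (Bᴴ * Y)ᴴ * (Bᴴ * Y) + lam • (Yᴴ * Y) := by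
      simp [hM, Matrix.add_mul, Matrix.mul_add, Matrix.mul_assoc, Matrix.conjTranspose_mul]
    rw [h1, rtr_add, rtr_smul, rtr_comm, rtr_comm Yᴴ, ← sqf_eq, ← sqf_eq] at h0
    apply sqf_zero
    have := sqf_nonneg (Bᴴ * Y)
    by_contra! hc
    have := mul_pos hlam hc
    linarith
  obtain ⟨N, hN⟩ := (LinearMap.injective_iff_surjective.mp hinj) 1
  have hN' : M * N = 1 := hN
  have hN2 : Nᴴ * M = 1 := by
    have := congrArg Matrix.conjTranspose hN'
    rwa [Matrix.conjTranspose_mul, hH, Matrix.conjTranspose_one] at this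
  have hE : Nᴴ = N := left_inv_eq_right_inv hN2 hN'
  exact ⟨⟨M, N, hN', hE ▸ hN2⟩, rfl⟩

lemma stepA {m r n : ℕ} (lam : ℝ) (A A' : Matrix (Fin m) (Fin r) ℍ[ℝ])
    (B : Matrix (Fin r) (Fin n) ℍ[ℝ]) (X : Matrix (Fin m) (Fin n) ℍ[ℝ])
    (h : (A' * B - X) * Bᴴ = lam • (A - A')) :
    sqf (A' * B - X) + 2 * lam * sqf (A' - A) ≤ sqf (A * B - X) := by
  have e : A * B - X = (A' * B - X) + (A - A') * B := by rw [Matrix.sub_mul]; abel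
  have e2 : rtr ((A' * B - X) * ((A - A') * B)ᴴ) = lam * sqf (A - A') := by
    rw [Matrix.conjTranspose_mul, ← Matrix.mul_assoc, h, Matrix.smul_mul, rtr_smul, sqf_eq]
  have e3 : sqf (A' - A) = sqf (A - A') := by simp only [sqf, Matrix.sub_apply, norm_sub_rev]
  rw [e, sqf_add, e2, e3]
  have := sqf_nonneg ((A - A') * B)
  linarith

lemma stepB {m r n : ℕ} (lam : ℝ) (A : Matrix (Fin m) (Fin r) ℍ[ℝ])
    (B B' : Matrix (Fin r) (Fin n) ℍ[ℝ]) (X : Matrix (Fin m) (Fin n) ℍ[ℝ])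
    (h : Aᴴ * (A * B' - X) = lam • (B - B')) :
    sqf (A * B' - X) + 2 * lam * sqf (B' - B) ≤ sqf (A * B - X) := by
  have := stepA lam Bᴴ B'ᴴ Aᴴ Xᴴ (by
    have := congrArg Matrix.conjTranspose h
    simpa [Matrix.conjTranspose_mul, conj_smul', Matrix.conjTranspose_sub] using this)
  simpa only [← Matrix.conjTranspose_mul, ← Matrix.conjTranspose_sub, sqf_conj] using this

/-- Every limit point of a bounded LRQD sequence is a stationary point. -/
theorem limit_point_is_stationary {m r n : ℕ}
    (D : Matrix (Fin m) (Fin n) ℍ[ℝ]) (Ω : Set (Fin m × Fin n))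
    (lam : ℝ) (hlam : 0 < lam)
    (A : ℕ → Matrix (Fin m) (Fin r) ℍ[ℝ]) (B : ℕ → Matrix (Fin r) (Fin n) ℍ[ℝ])
    (X : ℕ → Matrix (Fin m) (Fin n) ℍ[ℝ])
    (hXin : ∀ k, ∀ p ∈ Ω, X k p.1 p.2 = D p.1 p.2)
    (hXout : ∀ k, ∀ p : Fin m × Fin n, p ∉ Ω → X k p.1 p.2 = (A k * B k) p.1 p.2)
    (hA : ∀ k, A (k + 1) = (X k * (B k)ᴴ + lam • A k) *
      Ring.inverse (B k * (B k)ᴴ + lam • (1 : Matrix (Fin r) (Fin r) ℍ[ℝ])))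
    (hB : ∀ k, B (k + 1) =
      Ring.inverse ((A (k + 1))ᴴ * A (k + 1) + lam • (1 : Matrix (Fin r) (Fin r) ℍ[ℝ])) *
      ((A (k + 1))ᴴ * X k + lam • B k))
    (hbdd : ∃ M : ℝ, ∀ k, frob (A k) ≤ M ∧ frob (B k) ≤ M ∧ frob (X k) ≤ M) :
    ∀ (Asharp : Matrix (Fin m) (Fin r) ℍ[ℝ]) (Bsharp : Matrix (Fin r) (Fin n) ℍ[ℝ])
      (Xsharp : Matrix (Fin m) (Fin n) ℍ[ℝ]),
      (∃ φ : ℕ → ℕ, StrictMono φ ∧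
        Tendsto (fun i => frob (A (φ i) - Asharp)) atTop (nhds 0) ∧
        Tendsto (fun i => frob (B (φ i) - Bsharp)) atTop (nhds 0) ∧
        Tendsto (fun i => frob (X (φ i) - Xsharp)) atTop (nhds 0)) →
      ((∀ p ∈ Ω, Xsharp p.1 p.2 = D p.1 p.2) ∧
        (Asharp * Bsharp - Xsharp) * Bsharpᴴ = 0 ∧
        Asharpᴴ * (Asharp * Bsharp - Xsharp) = 0 ∧
        ∀ p : Fin m × Fin n, p ∉ Ω → Xsharp p.1 p.2 = (Asharp * Bsharp) p.1 p.2) := by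
  rintro As Bs Xs ⟨φ, hφ, hAs, hBs, hXs⟩
  have tA := tendsto_of_frob _ _ hAs
  have tB := tendsto_of_frob _ _ hBs
  have tX := tendsto_of_frob _ _ hXs
  have eA : ∀ k, (A (k+1) * B k - X k) * (B k)ᴴ = lam • (A k - A (k+1)) := by
    intro k
    have h1 : A (k+1) * (B k * (B k)ᴴ + lam • (1 : Matrix (Fin r) (Fin r) ℍ[ℝ]))
        = X k * (B k)ᴴ + lam • A k := by
      rw [hA k, Matrix.mul_assoc, Ring.inverse_mul_cancel _ (unit_aux (B k) lam hlam),
        Matrix.mul_one]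
    rw [Matrix.mul_add, Matrix.mul_smul, Matrix.mul_one] at h1
    rw [Matrix.sub_mul, Matrix.mul_assoc, smul_sub, sub_eq_sub_iff_add_eq_add, h1, add_comm]
  have eB : ∀ k, (A (k+1))ᴴ * (A (k+1) * B (k+1) - X k) = lam • (B k - B (k+1)) := by
    intro k
    have hu := unit_aux (A (k+1))ᴴ lam hlam
    rw [Matrix.conjTranspose_conjTranspose] at hu
    have h1 : ((A (k+1))ᴴ * A (k+1) + lam • (1 : Matrix (Fin r) (Fin r) ℍ[ℝ])) * B (k+1)
        = (A (k+1))ᴴ * X k + lam • B k := by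
      rw [hB k, ← Matrix.mul_assoc, Ring.mul_inverse_cancel _ hu, Matrix.one_mul]
    rw [Matrix.add_mul, Matrix.smul_mul, Matrix.one_mul] at h1
    rw [Matrix.mul_sub, ← Matrix.mul_assoc, smul_sub, sub_eq_sub_iff_add_eq_add, h1, add_comm]
  have eX : ∀ k, sqf (A (k+1) * B (k+1) - X (k+1)) ≤ sqf (A (k+1) * B (k+1) - X k) := by
    intro k
    refine Finset.sum_le_sum fun i _ => Finset.sum_le_sum fun j _ => ?_
    by_cases hp : (i, j) ∈ Ω
    · have h1 := hXin k _ hp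
      have h2 := hXin (k+1) _ hp
      simp only at h1 h2
      rw [Matrix.sub_apply, Matrix.sub_apply, h1, h2]
    · have h2 := hXout (k+1) _ hp
      simp only at h2
      rw [Matrix.sub_apply, h2, sub_self, norm_zero, zero_pow two_ne_zero]
      exact sq_nonneg _
  let f : ℕ → ℝ := fun k => sqf (A k * B k - X k)
  have hf : ∀ k, f (k+1) + 2 * lam * (sqf (A (k+1) - A k) + sqf (B (k+1) - B k)) ≤ f k := by
    intro k
    have h1 := stepA lam _ _ _ _ (eA k)
    have h2 := stepB lam _ _ _ _ (eB k)
    have h3 := eX k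
    simp only [f]
    linarith
  have hanti : Antitone f := antitone_nat_of_succ_le fun k => by
    have h1 := hf k
    have h2 := sqf_nonneg (A (k+1) - A k)
    have h3 := sqf_nonneg (B (k+1) - B k)
    have : 0 ≤ 2 * lam * (sqf (A (k+1) - A k) + sqf (B (k+1) - B k)) := by positivity
    linarith
  have hlim : ∃ l, Tendsto f atTop (nhds l) :=
    ⟨_, tendsto_atTop_ciInf hanti ⟨0, by rintro _ ⟨k, rfl⟩; exact sqf_nonneg _⟩⟩
  obtain ⟨l, hl⟩ := hlim
  have hd : Tendsto (fun k => (f k - f (k+1)) / (2 * lam)) atTop (nhds 0) := by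
    have := (hl.sub (hl.comp (tendsto_add_atTop_nat 1))).div_const (2 * lam)
    simpa using this
  have hle : ∀ k, sqf (A (k+1) - A k) + sqf (B (k+1) - B k) ≤ (f k - f (k+1)) / (2 * lam) := by
    intro k
    rw [le_div_iff₀ (by positivity)]
    have := hf k
    linarith
  have dA : Tendsto (fun k => A (k+1) - A k) atTop (nhds 0) := tendsto_of_sqf _ <|
    squeeze_zero (fun _ => sqf_nonneg _)
      (fun k => by have := hle k; have := sqf_nonneg (B (k+1) - B k); linarith) hd
  have dB : Tendsto (fun k => B (k+1) - B k) atTop (nhds 0) := tendsto_of_sqf _ <|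
    squeeze_zero (fun _ => sqf_nonneg _)
      (fun k => by have := hle k; have := sqf_nonneg (A (k+1) - A k); linarith) hd
  have dA' := dA.comp hφ.tendsto_atTop
  have dB' := dB.comp hφ.tendsto_atTop
  have tA' : Tendsto (fun i => A (φ i + 1)) atTop (nhds As) := by
    simpa [Function.comp_def] using dA'.add tA
  have tB' : Tendsto (fun i => B (φ i + 1)) atTop (nhds Bs) := by
    simpa [Function.comp_def] using dB'.add tB
  refine ⟨?_, ?_, ?_, ?_⟩
  · intro p hp
    refine tendsto_nhds_unique (tendsto_entry p.1 p.2 tX) ?_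
    simp only [hXin _ p hp]
    exact tendsto_const_nhds
  · refine tendsto_nhds_unique (mulT ((mulT tA' tB).sub tX) (conjT tB)) ?_
    simp only [eA]
    exact smulT lam tA tA'
  · refine tendsto_nhds_unique (mulT (conjT tA') ((mulT tA' tB').sub tX)) ?_
    simp only [eB]
    exact smulT lam tB tB'
  · intro p hp
    refine tendsto_nhds_unique (tendsto_entry p.1 p.2 tX) ?_
    simp only [hXout _ p hp]
    exact tendsto_entry p.1 p.2 (mulT tA tB)
end
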